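/- (Theorem 1, part b: vanishing Lagrangian gradients in w and z.) Under the same assumptions as Theorem 1 part a ((i) h + f bounded below on {z = Hx}; (ii) h m-strongly convex with L_h-Lipschitz gradient; (iii) w_k = ∇h(z_k) for all k; (iv) β ≥ L_h, β·m > 2L_h², L_x > β‖H‖²), the partial gradients of the augmented Lagrangian along the iterates vanish: ∇_w L_β(x_k, z_k, w_k) = Hx_k − z_k → 0 and ∇_z L_β(x_k, z_k, w_k) = ∇h(z_k) − w_k − β(Hx_k − z_k) → 0 as k → ∞. -/

import Mathlib

/-!
The augmented Lagrangian `V k = L (x k) (z k) (w k)` is a Lyapunov function. The `x`-step does not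
increase `L` because `Lx / 2 * ‖· - x k‖ ^ 2` dominates the quadratic term `β / 2 * ‖H (· - x k)‖ ^ 2`
which the linearization drops. The relations `w (k + 1) = ∇h (z (k + 1))` and the dual update say
that `z (k + 1)` is stationary for the `z`-step, so strong convexity yields a decrease of
at least `m / 2 * ‖z (k + 1) - z k‖ ^ 2`. The dual step raises `L` by `‖w (k + 1) - w k‖ ^ 2 / β`,
which is at most `Lh ^ 2 / β * ‖z (k + 1) - z k‖ ^ 2`. Altogether
`V (k + 1) ≤ V k - (m / 2 - Lh ^ 2 / β) * ‖z (k + 1) - z k‖ ^ 2`.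

`V` is bounded below: by convexity and the Lipschitz bound,
`h (H x) ≤ h z + ⟪∇h z, H x - z⟫ + Lh * ‖H x - z‖ ^ 2`, and, unless `p = 0`, `Lh ≤ β / 2` because `m ≤ Lh` and
`2 * Lh ^ 2 < β * m`. Hence `V` converges, so `z (k + 1) - z k → 0`, and therefore
`H (x (k + 1)) - z (k + 1) = (w (k + 1) - w k) / β → 0`.
-/

open scoped RealInnerProductSpace
open Filter Topology

noncomputable section

/-- First-order lower bound for strongly convex functions, obtained from the one-variable slope
inequality on the line through `a` and `b`. -/
lemma strong_convex_first_order {E : Type*} [NormedAddCommGroup E] [InnerProductSpace ℝ E]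
    [CompleteSpace E] {h : E → ℝ} (hh : Differentiable ℝ h) {m : ℝ}
    (hconv : ConvexOn ℝ Set.univ (fun z => h z - m / 2 * ‖z‖ ^ 2)) (a b : E) :
    h a + ⟪gradient h a, b - a⟫ + m / 2 * ‖b - a‖ ^ 2 ≤ h b := by
  have hline : HasDerivAt (AffineMap.lineMap a b : ℝ → E) (b - a) 0 :=
    AffineMap.hasDerivAt_lineMap
  have h0 : (AffineMap.lineMap a b : ℝ → E) 0 = a := by simp
  have h1 : (AffineMap.lineMap a b : ℝ → E) 1 = b := by simp
  have hgrad : HasFDerivAt h (InnerProductSpace.toDual ℝ E (gradient h a))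
      ((AffineMap.lineMap a b : ℝ → E) 0) := by
    rw [h0]; exact (hh a).hasGradientAt.hasFDerivAt
  have hd1 := hgrad.comp_hasDerivAt (0 : ℝ) hline
  have hd2 := hline.norm_sq
  have hd := hd1.sub (hd2.const_mul (m / 2))
  have hc := hconv.comp_affineMap (AffineMap.lineMap a b : ℝ →ᵃ[ℝ] E)
  have key := hc.le_slope_of_hasDerivAt (x := 0) (y := 1) (by simp) (by simp) one_pos hd
  simp only [slope_def_field, Function.comp, h0, h1, InnerProductSpace.toDual_apply_apply] at key
  have hb : ‖b‖ ^ 2 = ‖a‖ ^ 2 + 2 * ⟪a, b - a⟫ + ‖b - a‖ ^ 2 := by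
    rw [← norm_add_sq_real]; simp
  rw [hb] at key
  linarith

/-- A sequence bounded below that decreases by at least `c * d k ^ 2` at step `k` forces
`d k → 0`. -/
lemma tendsto_zero_of_sq_decrease {V d : ℕ → ℝ} {c C : ℝ} (hc : 0 < c)
    (hlow : ∀ k, C ≤ V k) (hdec : ∀ k, V (k + 1) ≤ V k - c * d k ^ 2) :
    Tendsto d atTop (𝓝 0) := by
  have hanti : Antitone V := antitone_nat_of_succ_le fun k => by
    have := hdec k
    nlinarith [mul_nonneg hc.le (sq_nonneg (d k))]
  have hV := tendsto_atTop_ciInf hanti ⟨C, by rintro _ ⟨k, rfl⟩; exact hlow k⟩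
  have hdiff : Tendsto (fun k => (V k - V (k + 1)) / c) atTop (𝓝 0) := by
    simpa using (hV.sub (hV.comp (tendsto_add_atTop_nat 1))).div_const c
  have hsq : Tendsto (fun k => d k ^ 2) atTop (𝓝 0) :=
    squeeze_zero (fun k => sq_nonneg _)
      (fun k => by rw [le_div_iff₀ hc]; linarith [hdec k]) hdiff
  rw [tendsto_zero_iff_abs_tendsto_zero]
  simpa [Real.sqrt_sq_eq_abs, Function.comp_def] using hsq.sqrt

/-- Theorem 1, part b: vanishing Lagrangian gradients in w and z. -/
theorem ladmm_vanishing_partial_gradients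
    (n p : ℕ)
    (H : EuclideanSpace ℝ (Fin n) →L[ℝ] EuclideanSpace ℝ (Fin p))
    (f : EuclideanSpace ℝ (Fin n) → ℝ)
    (h : EuclideanSpace ℝ (Fin p) → ℝ) (hh : Differentiable ℝ h)
    (m Lh β Lx : ℝ) (hm : 0 < m) (hLh : 0 < Lh) (hβ : 0 < β) (hLx : 0 < Lx)
    (hbdd : ∃ C : ℝ, ∀ x' : EuclideanSpace ℝ (Fin n), C ≤ h (H x') + f x')
    (hconv : ConvexOn ℝ Set.univ (fun z => h z - m / 2 * ‖z‖ ^ 2))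
    (hlip : ∀ z1 z2 : EuclideanSpace ℝ (Fin p),
      ‖gradient h z1 - gradient h z2‖ ≤ Lh * ‖z1 - z2‖)
    (hβLh : β ≥ Lh) (hβm : β * m > 2 * Lh ^ 2) (hLxβ : Lx > β * ‖H‖ ^ 2)
    (x : ℕ → EuclideanSpace ℝ (Fin n))
    (z w : ℕ → EuclideanSpace ℝ (Fin p))
    (L : EuclideanSpace ℝ (Fin n) → EuclideanSpace ℝ (Fin p) → EuclideanSpace ℝ (Fin p) → ℝ)
    (hL : ∀ x' z' w', L x' z' w' = h z' + f x' + ⟪w', H x' - z'⟫ + β / 2 * ‖H x' - z'‖ ^ 2)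
    (Lt : ℕ → EuclideanSpace ℝ (Fin n) → EuclideanSpace ℝ (Fin p) →
      EuclideanSpace ℝ (Fin p) → ℝ)
    (hLt : ∀ k x' z' w', Lt k x' z' w' = h z' + f x' + ⟪w', H x' - z'⟫
      + Lx / 2 * ‖x' - x k‖ ^ 2
      + β * ⟪x' - x k, (ContinuousLinearMap.adjoint H) (H (x k) - z')⟫)
    (hxmin : ∀ k x', Lt k (x (k + 1)) (z k) (w k) ≤ Lt k x' (z k) (w k))
    (hzmin : ∀ k z', L (x (k + 1)) (z (k + 1)) (w k) ≤ L (x (k + 1)) z' (w k))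
    (hw : ∀ k, w (k + 1) = w k + β • (H (x (k + 1)) - z (k + 1)))
    (hwgrad : ∀ k, w k = gradient h (z k)) :
    Tendsto (fun k => H (x k) - z k) atTop (𝓝 0) ∧
    Tendsto (fun k => gradient h (z k) - w k - β • (H (x k) - z k)) atTop (𝓝 0) := by
  have hsc := strong_convex_first_order hh hconv
  obtain ⟨C, hC⟩ := hbdd
  have hlow : ∀ k, C ≤ L (x k) (z k) (w k) := fun k => by
    set y := H (x k) with hy
    have e1 := hsc (z k) y
    have e2 := hsc y (z k)
    have e3 : ⟪gradient h y - gradient h (z k), y - z k⟫ ≤ Lh * ‖y - z k‖ ^ 2 := by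
      refine (real_inner_le_norm _ _).trans ?_
      nlinarith [hlip y (z k), norm_nonneg (y - z k)]
    rw [norm_sub_rev, ← neg_sub y, inner_neg_right] at e2
    rw [inner_sub_left] at e3
    -- Adding the two first-order bounds gives `m ≤ Lh` (scaled by `‖y - z k‖ ^ 2`, which may
    -- vanish).
    have e4 : m * ‖y - z k‖ ^ 2 ≤ Lh * ‖y - z k‖ ^ 2 := by linarith
    have e5 : Lh * ‖y - z k‖ ^ 2 ≤ β / 2 * ‖y - z k‖ ^ 2 := by
      refine le_of_mul_le_mul_left ?_ hLh
      nlinarith [mul_le_mul_of_nonneg_left e4 hβ.le, sq_nonneg ‖y - z k‖]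
    have e6 : 0 ≤ m / 2 * ‖y - z k‖ ^ 2 := by positivity
    have := hC (x k)
    rw [hL, hwgrad k]
    linarith
  have hlipw : ∀ k, ‖w (k + 1) - w k‖ ≤ Lh * ‖z (k + 1) - z k‖ := fun k => by
    rw [hwgrad (k + 1), hwgrad k]; exact hlip _ _
  have hr : ∀ k, H (x (k + 1)) - z (k + 1) = β⁻¹ • (w (k + 1) - w k) := fun k => by
    rw [hw k, add_sub_cancel_left, inv_smul_smul₀ hβ.ne']
  have hdec : ∀ k, L (x (k + 1)) (z (k + 1)) (w (k + 1)) ≤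
      L (x k) (z k) (w k) - (m / 2 - Lh ^ 2 / β) * ‖z (k + 1) - z k‖ ^ 2 := fun k => by
    have xstep : L (x (k + 1)) (z k) (w k) ≤ L (x k) (z k) (w k) := by
      have e := hxmin k (x k)
      simp only [hLt, ContinuousLinearMap.adjoint_inner_right] at e
      simp only [map_sub, map_zero, sub_self, norm_zero, inner_zero_left] at e
      have e1 : ‖H (x (k + 1)) - H (x k)‖ ^ 2 ≤ ‖H‖ ^ 2 * ‖x (k + 1) - x k‖ ^ 2 := by
        rw [← map_sub, ← mul_pow]
        exact pow_le_pow_left₀ (norm_nonneg _) (H.le_opNorm _) 2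
      have e2 : ‖H (x (k + 1)) - z k‖ ^ 2 = ‖H (x (k + 1)) - H (x k)‖ ^ 2
          + 2 * ⟪H (x (k + 1)) - H (x k), H (x k) - z k⟫ + ‖H (x k) - z k‖ ^ 2 := by
        rw [← norm_add_sq_real]; simp
      have e3 : β * ‖H (x (k + 1)) - H (x k)‖ ^ 2 ≤ Lx * ‖x (k + 1) - x k‖ ^ 2 := by
        nlinarith [mul_le_mul_of_nonneg_left e1 hβ.le, sq_nonneg ‖x (k + 1) - x k‖]
      rw [hL, hL, e2]
      linarith
    have zwstep : L (x (k + 1)) (z (k + 1)) (w (k + 1)) + m / 2 * ‖z (k + 1) - z k‖ ^ 2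
        ≤ L (x (k + 1)) (z k) (w k) + β * ‖H (x (k + 1)) - z (k + 1)‖ ^ 2 := by
      have e := hsc (z (k + 1)) (z k)
      rw [← hwgrad, norm_sub_rev, hw k, inner_add_left, inner_smul_left] at e
      rw [hL, hL, hw k]
      set r := H (x (k + 1)) - z (k + 1) with hrdef
      have e1 : H (x (k + 1)) - z k = r - (z k - z (k + 1)) := by rw [hrdef]; abel
      clear_value r
      rw [e1, norm_sub_sq_real r, inner_sub_right, inner_add_left, inner_smul_left,
        real_inner_self_eq_norm_sq]
      simp only [conj_trivial] at e ⊢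
      have : 0 ≤ β * ‖z k - z (k + 1)‖ ^ 2 := by positivity
      linarith
    have wbound : β * ‖H (x (k + 1)) - z (k + 1)‖ ^ 2
        ≤ Lh ^ 2 / β * ‖z (k + 1) - z k‖ ^ 2 := by
      have e := hlipw k
      rw [hr k, norm_smul, Real.norm_of_nonneg (by positivity)]
      have e1 : β * (β⁻¹ * ‖w (k + 1) - w k‖) ^ 2 = ‖w (k + 1) - w k‖ ^ 2 / β := by
        field_simp
      rw [e1, div_mul_eq_mul_div, ← mul_pow]
      gcongr
    linarith
  have hc : 0 < m / 2 - Lh ^ 2 / β := by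
    rw [sub_pos, div_lt_iff₀ hβ]; linarith
  have hdz : Tendsto (fun k => ‖z (k + 1) - z k‖) atTop (𝓝 0) :=
    tendsto_zero_of_sq_decrease hc hlow hdec
  have hdw : Tendsto (fun k => w (k + 1) - w k) atTop (𝓝 0) :=
    squeeze_zero_norm hlipw (by simpa using hdz.const_mul Lh)
  have hres : Tendsto (fun k => H (x k) - z k) atTop (𝓝 0) := by
    rw [← tendsto_add_atTop_iff_nat 1]
    simp only [hr]
    simpa using hdw.const_smul β⁻¹
  refine ⟨hres, ?_⟩
  simpa [← hwgrad] using (hres.const_smul β).neg
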